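/- Let E be a real inner product space and let f₁, …, f_N : E → ℝ be differentiable functions that are each μ-strongly convex (μ ≥ 0) and whose gradients ∇f_i are all L-Lipschitz (L ≥ 0). Let λ ∈ ℝ^N satisfy λ_i ≥ 0 for all i and Σ_{i=1}^N λ_i = 1. Let x_r, x ∈ E, let J ≥ 1 be an integer, and let v_{i,j} ∈ E be arbitrary points for i = 1, …, N and j = 1, …, J. Define d = (1/J)·Σ_{i=1}^N Σ_{j=1}^J λ_i ∇f_i(v_{i,j}) and ℰ = (1/J)·Σ_{i=1}^N Σ_{j=1}^J λ_i ‖v_{i,j} − x_r‖². Then ⟨d, x_r − x⟩ ≥ Σ_{i=1}^N λ_i f_i(x_r) − Σ_{i=1}^N λ_i f_i(x) + (μ/4)·‖x_r − x‖² − L·ℰ. -/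

import Mathlib

open scoped RealInnerProductSpace

/-!
Fix one client and one local iterate `w`. Convexity at the anchor `x_r` together with the Lipschitz
gradient bounds `f x_r` from above by the linearization of `f` at `w` plus `L ‖w - x_r‖²`; strong
convexity at `w` bounds `f x` from below by the same linearization. Subtracting eliminates `f w`,
and the two quadratic terms, centred at `w`, dominate `(μ/4) ‖x_r - x‖²` because
`‖a + b‖² ≤ 2 (‖a‖² + ‖b‖²)`. Averaging over clients and iterates is linear.
-/

theorem norm_sub_sq_le_two_mul_add {G : Type*} [SeminormedAddCommGroup G] (a b c : G) :
    ‖a - c‖ ^ 2 ≤ 2 * (‖a - b‖ ^ 2 + ‖b - c‖ ^ 2) :=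
  calc ‖a - c‖ ^ 2 ≤ (‖a - b‖ + ‖b - c‖) ^ 2 := by
        gcongr
        exact norm_sub_le_norm_sub_add_norm_sub a b c
    _ ≤ 2 * (‖a - b‖ ^ 2 + ‖b - c‖ ^ 2) := add_sq_le

section PerturbedStrongConvexity

variable {E : Type*} [SeminormedAddCommGroup E] [InnerProductSpace ℝ E]

theorem inner_le_mul_norm_sq_of_norm_le {g u : E} {L : ℝ} (h : ‖g‖ ≤ L * ‖u‖) :
    ⟪g, u⟫ ≤ L * ‖u‖ ^ 2 :=
  calc ⟪g, u⟫ ≤ ‖g‖ * ‖u‖ := real_inner_le_norm g u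
    _ ≤ L * ‖u‖ * ‖u‖ := by gcongr
    _ = L * ‖u‖ ^ 2 := by ring

theorem le_linearization_add_mul_norm_sq {f : E → ℝ} {f' : E → E} {L μ : ℝ}
    (hLip : ∀ a b, ‖f' a - f' b‖ ≤ L * ‖a - b‖)
    (hsc : ∀ a b, f a + ⟪f' a, b - a⟫ + μ / 2 * ‖b - a‖ ^ 2 ≤ f b) (w y : E) :
    f y ≤ f w + ⟪f' w, y - w⟫ + L * ‖y - w‖ ^ 2 - μ / 2 * ‖y - w‖ ^ 2 := by
  have convex_at_y : f y - ⟪f' y, y - w⟫ + μ / 2 * ‖y - w‖ ^ 2 ≤ f w := by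
    simpa only [← neg_sub y w, inner_neg_right, norm_neg, ← sub_eq_add_neg] using hsc y w
  have gradient_change : ⟪f' y, y - w⟫ - ⟪f' w, y - w⟫ ≤ L * ‖y - w‖ ^ 2 := by
    rw [← inner_sub_left]
    exact inner_le_mul_norm_sq_of_norm_le (hLip y w)
  linarith

theorem perturbed_strong_convexity {f : E → ℝ} {f' : E → E} {L μ : ℝ} (hμ : 0 ≤ μ)
    (hLip : ∀ a b, ‖f' a - f' b‖ ≤ L * ‖a - b‖)
    (hsc : ∀ a b, f a + ⟪f' a, b - a⟫ + μ / 2 * ‖b - a‖ ^ 2 ≤ f b) (w y x : E) :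
    f y - f x + μ / 4 * ‖y - x‖ ^ 2 - L * ‖w - y‖ ^ 2 ≤ ⟪f' w, y - x⟫ := by
  have upper_at_y := le_linearization_add_mul_norm_sq hLip hsc w y
  have lower_at_x := hsc w x
  have inner_split : ⟪f' w, y - x⟫ = ⟪f' w, y - w⟫ - ⟪f' w, x - w⟫ := by
    rw [← inner_sub_right, sub_sub_sub_cancel_right]
  have quadratic : μ / 4 * ‖y - x‖ ^ 2 ≤ μ / 4 * (2 * (‖y - w‖ ^ 2 + ‖w - x‖ ^ 2)) := by
    gcongr
    exact norm_sub_sq_le_two_mul_add y w x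
  rw [norm_sub_rev w x] at quadratic
  rw [norm_sub_rev w y]
  linarith

theorem weighted_perturbed_strong_convexity {ι : Type*} {s : Finset ι} {f : ι → E → ℝ}
    {f' : ι → E → E} {L μ : ℝ} (hμ : 0 ≤ μ)
    (hLip : ∀ k ∈ s, ∀ a b, ‖f' k a - f' k b‖ ≤ L * ‖a - b‖)
    (hsc : ∀ k ∈ s, ∀ a b, f k a + ⟪f' k a, b - a⟫ + μ / 2 * ‖b - a‖ ^ 2 ≤ f k b)
    {p : ι → ℝ} (hp_nonneg : ∀ k ∈ s, 0 ≤ p k) (hp_sum : ∑ k ∈ s, p k = 1)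
    (v : ι → E) (y x : E) :
    ∑ k ∈ s, p k * f k y - ∑ k ∈ s, p k * f k x + μ / 4 * ‖y - x‖ ^ 2
      - L * ∑ k ∈ s, p k * ‖v k - y‖ ^ 2 ≤ ⟪∑ k ∈ s, p k • f' k (v k), y - x⟫ :=
  calc
    _ = ∑ k ∈ s, p k * (f k y - f k x + μ / 4 * ‖y - x‖ ^ 2 - L * ‖v k - y‖ ^ 2) := by
        simp only [mul_add, mul_sub, Finset.sum_add_distrib, Finset.sum_sub_distrib,
          ← Finset.sum_mul, hp_sum, one_mul, Finset.mul_sum, mul_left_comm L]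
    _ ≤ ∑ k ∈ s, p k * ⟪f' k (v k), y - x⟫ :=
        Finset.sum_le_sum fun k hk => mul_le_mul_of_nonneg_left
          (perturbed_strong_convexity hμ (hLip k hk) (hsc k hk) (v k) y x) (hp_nonneg k hk)
    _ = ⟪∑ k ∈ s, p k • f' k (v k), y - x⟫ := by
        simp only [sum_inner, real_inner_smul_left]

end PerturbedStrongConvexity

theorem sum_prod_one_div_card_mul {ι κ R : Type*} [Fintype ι] [Fintype κ] [Nonempty κ]
    [DivisionSemiring R] [CharZero R] (a : ι → R) :
    ∑ k : ι × κ, 1 / (Fintype.card κ : R) * a k.1 = ∑ i, a i := by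
  simp [Fintype.sum_prod_type]

/-- Lower bound on the term T₁ in Lemma A.5: for the aggregated update
`d = (1/J) Σᵢ Σⱼ λᵢ ∇fᵢ(v_{i,j})` of `μ`-strongly convex, `L`-smooth local objectives,
`⟪d, x_r − x⟫ ≥ Σᵢ λᵢ fᵢ(x_r) − Σᵢ λᵢ fᵢ(x) + (μ/4)‖x_r − x‖² − L·ℰ`. -/
theorem T1_lower_bound
    {E : Type*} [NormedAddCommGroup E] [InnerProductSpace ℝ E]
    (N : ℕ) (f : Fin N → E → ℝ) (f' : Fin N → E → E) (L μ : ℝ)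
    (hL : 0 ≤ L) (hμ : 0 ≤ μ)
    (hdiff : ∀ i (y : E),
      HasFDerivAt (f i) (InnerProductSpace.toDualMap ℝ E (f' i y) : E →L[ℝ] ℝ) y)
    (hLip : ∀ i (x₁ x₂ : E), ‖f' i x₁ - f' i x₂‖ ≤ L * ‖x₁ - x₂‖)
    (hsc : ∀ i (a b : E), f i b ≥ f i a + ⟪f' i a, b - a⟫ + μ / 2 * ‖b - a‖ ^ 2)
    (lam : Fin N → ℝ) (hlam0 : ∀ i, 0 ≤ lam i) (hlam1 : ∑ i, lam i = 1)
    (xr x : E) (J : ℕ) (hJ : 1 ≤ J) (v : Fin N → Fin J → E)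
    (d : E) (hd : d = (1 / (J : ℝ)) • ∑ i, ∑ j, lam i • f' i (v i j))
    (ℰ : ℝ) (hE : ℰ = (1 / (J : ℝ)) * ∑ i, ∑ j, lam i * ‖v i j - xr‖ ^ 2) :
    ⟪d, xr - x⟫ ≥ (∑ i, lam i * f i xr) - (∑ i, lam i * f i x)
      + μ / 4 * ‖xr - x‖ ^ 2 - L * ℰ := by
  have : Nonempty (Fin J) := ⟨⟨0, hJ⟩⟩
  have average (a : Fin N → ℝ) : ∑ k : Fin N × Fin J, 1 / (J : ℝ) * a k.1 = ∑ i, a i := by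
    simpa only [Fintype.card_fin] using sum_prod_one_div_card_mul (κ := Fin J) a
  have bound := weighted_perturbed_strong_convexity (s := Finset.univ)
    (f := fun k : Fin N × Fin J => f k.1) (p := fun k => 1 / (J : ℝ) * lam k.1) hμ
    (fun k _ => hLip k.1) (fun k _ => hsc k.1)
    (fun k _ => mul_nonneg (by positivity) (hlam0 k.1)) ((average lam).trans hlam1)
    (fun k => v k.1 k.2) xr x
  simp only [mul_assoc, mul_smul, ← Finset.mul_sum, ← Finset.smul_sum] at bound average
  rw [average fun i => lam i * f i xr, average fun i => lam i * f i x] at bound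
  simpa only [hd, hE, Fintype.sum_prod_type] using bound
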